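/- Let N ≥ 1, let 𝒴₀, …, 𝒴_{N−1} be ℂ-linear subspaces of the p₂×q₂ complex matrices, and let T1 : 𝕋 → Matrix q₁ p₁ ℂ, T2 : 𝕋 → Matrix q₁ p₂ ℂ, T3 : 𝕋 → Matrix q₂ p₁ ℂ be continuous. Suppose U_i inner continuous in H∞ and U_o continuous in H∞, pointwise invertible with inverse in H∞, with T2 = U_i·U_o pointwise; define Y := (I − U_iU_i^∼)T1. Suppose for every γ > ‖Y‖∞ we are given: Y_{o,γ} continuous pointwise invertible with Y_{o,γ}, Y_{o,γ}⁻¹ ∈ H∞ and Y_{o,γ}ᴴY_{o,γ} = γ²·I − YᴴY pointwise; V_{ci,γ} continuous co-inner in H∞ and V_{co,γ} continuous pointwise invertible with V_{co,γ}, V_{co,γ}⁻¹ ∈ H∞ and T3·Y_{o,γ}⁻¹ = V_{co,γ}·V_{ci,γ}; and, whenever Z_γ := U_i^∼·T1·Y_{o,γ}⁻¹·(I − V_{ci,γ}^∼V_{ci,γ}) satisfies ‖Z_γ‖∞ < 1, a continuous pointwise-invertible Z_{co,γ} with Z_{co,γ}, Z_{co,γ}⁻¹ ∈ H∞ and Z_{co,γ}·Z_{co,γ}^∼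 = I − Z_γ·Z_γ^∼ pointwise. Set R_γ := Z_{co,γ}⁻¹·U_i^∼·T1·Y_{o,γ}⁻¹·V_{ci,γ}^∼, and for V(z) := Σ_{i=0}^{N−1} V_i·z^{−i} set R̂_γ(V)(z) := z^N·R_γ(z) − Z_{co,γ}(z)⁻¹·U_o(z)·(z^N·V(z))·V_{co,γ}(z). Then inf{‖T1 − T2·(V + z^{−N}·D)·T3‖∞ : V_i ∈ 𝒴_i for all i, D : 𝕋 → Matrix p₂ q₂ ℂ continuous with D ∈ H∞} = inf{γ : γ > ‖Y‖∞, ‖Z_γ‖∞ < 1, and there exist V₀ ∈ 𝒴₀, …, V_{N−1} ∈ 𝒴_{N−1} with dist(R̂_γ(V), H∞) < 1}. -/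

import Mathlib

open Matrix

/-- The spectral norm (ℓ²→ℓ² operator norm, largest singular value) of a complex matrix. -/
noncomputable def specNorm {m n : Type*} [Fintype m] [Fintype n] [DecidableEq n]
    (M : Matrix m n ℂ) : ℝ :=
  ‖LinearMap.toContinuousLinearMap (Matrix.toEuclideanLin M)‖

/-- The `H∞` norm of a matrix-valued function on the unit circle:
`‖F‖∞ = sup_{z ∈ 𝕋} ‖F(z)‖`. -/
noncomputable def hinfNorm {m n : Type*} [Fintype m] [Fintype n] [DecidableEq n]
    (F : Circle → Matrix m n ℂ) : ℝ :=
  ⨆ z : Circle, specNorm (F z)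

/-- A matrix-valued function `F` on the unit circle belongs to `H∞` if there is a
matrix-valued function `G`, continuous on the closed unit disc and analytic on the open
unit disc, with `F(z) = G(z⁻¹)` for all `z` on the circle. -/
def MemHInf {m n : Type*} (F : Circle → Matrix m n ℂ) : Prop :=
  ∃ G : ℂ → Matrix m n ℂ,
    (∀ i j, ContinuousOn (fun w => G w i j) (Metric.closedBall (0 : ℂ) 1)) ∧
    (∀ i j, AnalyticOn ℂ (fun w => G w i j) (Metric.ball (0 : ℂ) 1)) ∧
    (∀ z : Circle, F z = G ((z : ℂ)⁻¹))

/-- The distance from `R` to `H∞` in the `‖·‖∞` norm: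
`dist(R, H∞) = inf { ‖R − X‖∞ : X continuous, X ∈ H∞ }`. -/
noncomputable def distHInf {m n : Type*} [Fintype m] [Fintype n] [DecidableEq n]
    (R : Circle → Matrix m n ℂ) : ℝ :=
  sInf {c : ℝ | ∃ X : Circle → Matrix m n ℂ,
    Continuous X ∧ MemHInf X ∧ c = hinfNorm fun z => R z - X z}

section Helpers

open scoped ComplexOrder

theorem specNorm_nonneg' {m n : Type*} [Fintype m] [Fintype n] [DecidableEq n]
    (M : Matrix m n ℂ) : 0 ≤ specNorm M := norm_nonneg _

theorem re_dot_gram {m n : Type*} [Fintype m] [Fintype n] [DecidableEq n]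
    (M : Matrix m n ℂ) (x : EuclideanSpace ℂ n) :
    star x.ofLp ⬝ᵥ ((Mᴴ * M) *ᵥ x.ofLp) = ((‖Matrix.toEuclideanLin M x‖ ^ 2 : ℝ) : ℂ) := by
  rw [← Matrix.mulVec_mulVec, Matrix.dotProduct_mulVec, ← Matrix.star_mulVec]
  have h := inner_self_eq_norm_sq_to_K (𝕜 := ℂ) (Matrix.toEuclideanLin M x)
  rw [EuclideanSpace.inner_eq_star_dotProduct, dotProduct_comm] at h
  simpa using h

theorem dot_def {m n : Type*} [Fintype m] [Fintype n] [DecidableEq n]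
    (M : Matrix m n ℂ) (c : ℝ) (x : EuclideanSpace ℂ n) :
    star x.ofLp ⬝ᵥ ((((c : ℂ) ^ 2) • (1 : Matrix n n ℂ) - Mᴴ * M) *ᵥ x.ofLp)
      = ((c ^ 2 * ‖x‖ ^ 2 - ‖Matrix.toEuclideanLin M x‖ ^ 2 : ℝ) : ℂ) := by
  have h1 := re_dot_gram (1 : Matrix n n ℂ) x
  have h2 := re_dot_gram M x
  have h3 : Matrix.toEuclideanLin (1 : Matrix n n ℂ) x = x := by
    ext i; simp
  rw [h3] at h1
  simp only [conjTranspose_one, Matrix.mul_one] at h1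
  rw [Matrix.sub_mulVec, dotProduct_sub, h2, Matrix.smul_mulVec, dotProduct_smul, h1]
  push_cast
  simp

theorem specNorm_lt_iff {m n : Type*} [Fintype m] [Fintype n] [DecidableEq n]
    (M : Matrix m n ℂ) {c : ℝ} (hc : 0 < c) :
    specNorm M < c ↔ (((c : ℂ) ^ 2) • (1 : Matrix n n ℂ) - Mᴴ * M).PosDef := by
  constructor
  · intro h
    refine Matrix.PosDef.of_dotProduct_mulVec_pos ?_ ?_
    · simp [Matrix.IsHermitian, conjTranspose_sub, conjTranspose_mul, conjTranspose_smul]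
    · intro x hx
      have e := dot_def M c (WithLp.toLp 2 x)
      simp only [] at e
      rw [e]
      have hx' : 0 < ‖WithLp.toLp 2 x‖ := by
        rw [norm_pos_iff]; intro h0; apply hx
        simpa using h0
      have hle : ‖Matrix.toEuclideanLin M (WithLp.toLp 2 x)‖ ≤ specNorm M * ‖WithLp.toLp 2 x‖ :=
        (LinearMap.toContinuousLinearMap (Matrix.toEuclideanLin M)).le_opNorm _
      have hlt : ‖Matrix.toEuclideanLin M (WithLp.toLp 2 x)‖ < c * ‖WithLp.toLp 2 x‖ :=
        lt_of_le_of_lt hle (by gcongr)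
      have : 0 < c ^ 2 * ‖WithLp.toLp 2 x‖ ^ 2 - ‖Matrix.toEuclideanLin M (WithLp.toLp 2 x)‖ ^ 2 := by
        nlinarith [norm_nonneg (Matrix.toEuclideanLin M (WithLp.toLp 2 x))]
      exact_mod_cast this
  · intro h
    have key : ∀ x : EuclideanSpace ℂ n, x ≠ 0 → ‖Matrix.toEuclideanLin M x‖ < c * ‖x‖ := by
      intro x hx
      have hp := h.dotProduct_mulVec_pos (x := x.ofLp) (by simpa using hx)
      rw [dot_def M c x] at hp
      have hp' : 0 < c ^ 2 * ‖x‖ ^ 2 - ‖Matrix.toEuclideanLin M x‖ ^ 2 := by exact_mod_cast hp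
      refine lt_of_pow_lt_pow_left₀ 2 (by positivity) ?_
      nlinarith
    by_cases hne : (Metric.sphere (0 : EuclideanSpace ℂ n) 1).Nonempty
    · obtain ⟨x0, hx0, hmax⟩ := (isCompact_sphere (0 : EuclideanSpace ℂ n) 1).exists_isMaxOn hne
        (f := fun x => ‖LinearMap.toContinuousLinearMap (Matrix.toEuclideanLin M) x‖)
        (by fun_prop)
      have hx0n : ‖x0‖ = 1 := by simpa using hx0
      have hlt := key x0 (by intro h0; simp [h0] at hx0n)
      rw [hx0n, mul_one] at hlt
      refine lt_of_le_of_lt ?_ hlt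
      refine ContinuousLinearMap.opNorm_le_of_unit_norm (𝕜 := ℂ) (norm_nonneg _) ?_
      intro x hx
      exact hmax (by simpa using hx)
    · refine lt_of_le_of_lt ?_ hc
      refine ContinuousLinearMap.opNorm_le_of_unit_norm (𝕜 := ℂ) le_rfl ?_
      intro x hx
      exact absurd ⟨x, by simpa using hx⟩ hne

theorem specNorm_lt_one_iff {m n : Type*} [Fintype m] [Fintype n] [DecidableEq n]
    (M : Matrix m n ℂ) : specNorm M < 1 ↔ (1 - Mᴴ * M).PosDef := by
  have := specNorm_lt_iff M one_pos
  simpa using this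

open scoped Matrix.Norms.L2Operator in
theorem specNorm_conjTranspose {m n : Type*} [Fintype m] [Fintype n] [DecidableEq n]
    [DecidableEq m] (M : Matrix m n ℂ) : specNorm Mᴴ = specNorm M :=
  Matrix.l2_opNorm_conjTranspose M

theorem specNorm_lt_one_iff' {m n : Type*} [Fintype m] [Fintype n] [DecidableEq n]
    [DecidableEq m] (M : Matrix m n ℂ) : specNorm M < 1 ↔ (1 - M * Mᴴ).PosDef := by
  rw [← specNorm_conjTranspose, specNorm_lt_one_iff, conjTranspose_conjTranspose]

theorem specNorm_unit_smul {m n : Type*} [Fintype m] [Fintype n] [DecidableEq n]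
    (M : Matrix m n ℂ) (c : ℂ) (hc : ‖c‖ = 1) : specNorm (c • M) = specNorm M := by
  unfold specNorm
  rw [map_smul, map_smul, norm_smul, hc, one_mul]

theorem specNorm_continuous {m n : Type*} [Fintype m] [Fintype n] [DecidableEq n] :
    Continuous (specNorm : Matrix m n ℂ → ℝ) := by
  have h : Continuous ((Matrix.toEuclideanLin (𝕜 := ℂ) (m := m) (n := n)).trans
      LinearMap.toContinuousLinearMap).toLinearMap :=
    LinearMap.continuous_of_finiteDimensional _
  exact h.norm

theorem hinfNorm_lt_iff {m n : Type*} [Fintype m] [Fintype n] [DecidableEq n]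
    {F : Circle → Matrix m n ℂ} (hF : Continuous F) (c : ℝ) :
    hinfNorm F < c ↔ ∀ z, specNorm (F z) < c := by
  have hc : Continuous fun z => specNorm (F z) := specNorm_continuous.comp hF
  constructor
  · intro h z
    exact lt_of_le_of_lt (le_ciSup (isCompact_range hc).bddAbove z) h
  · intro h
    obtain ⟨z, -, hz⟩ := isCompact_univ.exists_isMaxOn (Set.univ_nonempty) hc.continuousOn
    exact lt_of_le_of_lt (ciSup_le fun w => hz (Set.mem_univ w)) (h z)

theorem hinfNorm_nonneg' {m n : Type*} [Fintype m] [Fintype n] [DecidableEq n]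
    (F : Circle → Matrix m n ℂ) : 0 ≤ hinfNorm F :=
  Real.iSup_nonneg fun _ => specNorm_nonneg' _

theorem MemHInf.cont {m n : Type*} {F : Circle → Matrix m n ℂ} (h : MemHInf F) :
    Continuous F := by
  obtain ⟨G, hG, -, hFG⟩ := h
  refine continuous_matrix fun i j => ?_
  have : (fun z => F z i j) = fun z : Circle => G ((z : ℂ)⁻¹) i j := by
    funext z; rw [hFG]
  rw [this]
  refine (hG i j).comp_continuous (f := fun z : Circle => ((z : ℂ)⁻¹)) ?_ ?_
  · exact Continuous.inv₀ (f := fun z : Circle => (z : ℂ)) (by fun_prop) fun z => z.coe_ne_zero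
  · intro z
    have : ‖(z : ℂ)‖ = 1 := Circle.norm_coe z
    simp [this]

theorem MemHInf.mul' {l m n : Type*} [Fintype m] {F : Circle → Matrix l m ℂ}
    {F' : Circle → Matrix m n ℂ} (h : MemHInf F) (h' : MemHInf F') :
    MemHInf fun z => F z * F' z := by
  obtain ⟨G, hG, aG, hFG⟩ := h
  obtain ⟨G', hG', aG', hFG'⟩ := h'
  refine ⟨fun w => G w * G' w, fun i j => ?_, fun i j => ?_, fun z => by
    beta_reduce; rw [hFG z, hFG' z]⟩
  · simp only [Matrix.mul_apply]
    exact continuousOn_finsetSum _ fun k _ => (hG i k).mul (hG' k j)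
  · simp only [Matrix.mul_apply]
    exact Finset.analyticOn_fun_sum _ fun k _ => (aG i k).mul (aG' k j)

theorem MemHInf.zero' {m n : Type*} : MemHInf (fun _ => 0 : Circle → Matrix m n ℂ) :=
  ⟨fun _ => 0, fun _ _ => continuousOn_const, fun _ _ => analyticOn_const, fun _ => rfl⟩

theorem distHInf_lt_iff {m n : Type*} [Fintype m] [Fintype n] [DecidableEq n]
    (R : Circle → Matrix m n ℂ) (c : ℝ) :
    distHInf R < c ↔ ∃ X : Circle → Matrix m n ℂ, MemHInf X ∧
      hinfNorm (fun z => R z - X z) < c := by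
  constructor
  · intro h
    obtain ⟨_, ⟨X, -, hX, rfl⟩, hlt⟩ := exists_lt_of_csInf_lt
      (by exact ⟨_, fun _ => 0, continuous_const, MemHInf.zero', rfl⟩) h
    exact ⟨X, hX, hlt⟩
  · rintro ⟨X, hX, hlt⟩
    refine lt_of_le_of_lt (csInf_le ⟨0, ?_⟩ ⟨X, hX.cont, hX, rfl⟩) hlt
    rintro _ ⟨X, -, -, rfl⟩
    exact hinfNorm_nonneg' _

theorem pyth {m n k : Type*} [Fintype m] [Fintype n] [Fintype k] [DecidableEq m] [DecidableEq k]
    (U : Matrix m k ℂ) (hU : Uᴴ * U = 1) (E : Matrix m n ℂ) :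
    Eᴴ * E = ((1 - U * Uᴴ) * E)ᴴ * ((1 - U * Uᴴ) * E) + (Uᴴ * E)ᴴ * (Uᴴ * E) := by
  have hP : (1 - U * Uᴴ) * (1 - U * Uᴴ) = 1 - U * Uᴴ := by
    have : U * Uᴴ * (U * Uᴴ) = U * Uᴴ := by
      rw [Matrix.mul_assoc, ← Matrix.mul_assoc Uᴴ, hU, Matrix.one_mul]
    rw [Matrix.mul_sub, Matrix.sub_mul, Matrix.sub_mul, this]; simp
  have hPs : (1 - U * Uᴴ)ᴴ = 1 - U * Uᴴ := by simp
  rw [conjTranspose_mul, hPs, Matrix.mul_assoc, ← Matrix.mul_assoc (1 - U * Uᴴ), hP,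
    conjTranspose_mul, conjTranspose_conjTranspose, Matrix.sub_mul, Matrix.mul_sub]
  simp [Matrix.mul_assoc]

theorem pyth' {m n k : Type*} [Fintype m] [Fintype n] [Fintype k] [DecidableEq m] [DecidableEq k]
    (V : Matrix k m ℂ) (hV : V * Vᴴ = 1) (W : Matrix n m ℂ) :
    W * Wᴴ = (W * (1 - Vᴴ * V)) * (W * (1 - Vᴴ * V))ᴴ + (W * Vᴴ) * (W * Vᴴ)ᴴ := by
  have := pyth Vᴴ (by simpa using hV) Wᴴ
  simpa [conjTranspose_mul] using this

variable {q1 q2 p1 p2 : ℕ}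

/-- Pointwise version of the first step. -/
theorem step0 (T1 : Matrix (Fin q1) (Fin p1) ℂ) (Ui : Matrix (Fin q1) (Fin p2) ℂ)
    (hU : Uiᴴ * Ui = 1) (A : Matrix (Fin p2) (Fin p1) ℂ) :
    (T1 - Ui * A)ᴴ * (T1 - Ui * A) = ((1 - Ui * Uiᴴ) * T1)ᴴ * ((1 - Ui * Uiᴴ) * T1)
      + (Uiᴴ * T1 - A)ᴴ * (Uiᴴ * T1 - A) := by
  rw [pyth Ui hU (T1 - Ui * A)]
  have h1 : (1 - Ui * Uiᴴ) * (T1 - Ui * A) = (1 - Ui * Uiᴴ) * T1 := by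
    rw [Matrix.mul_sub _ T1, ← Matrix.mul_assoc _ Ui, Matrix.sub_mul 1 _ Ui, Matrix.mul_assoc Ui,
      hU]
    simp
  have h2 : Uiᴴ * (T1 - Ui * A) = Uiᴴ * T1 - A := by
    rw [Matrix.mul_sub, ← Matrix.mul_assoc, hU, Matrix.one_mul]
  rw [h1, h2]

theorem step0_Y (T1 : Matrix (Fin q1) (Fin p1) ℂ) (Ui : Matrix (Fin q1) (Fin p2) ℂ)
    (hU : Uiᴴ * Ui = 1) (A : Matrix (Fin p2) (Fin p1) ℂ) {γ : ℝ} 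
    (h : specNorm (T1 - Ui * A) < γ) : specNorm ((1 - Ui * Uiᴴ) * T1) < γ := by
  have hγ : 0 < γ := lt_of_le_of_lt (specNorm_nonneg' _) h
  rw [specNorm_lt_iff _ hγ] at h ⊢
  rw [step0 T1 Ui hU A] at h
  have h2 := h.add_posSemidef (Matrix.posSemidef_conjTranspose_mul_self (Uiᴴ * T1 - A))
  convert h2 using 1
  abel

theorem step1 (T1 : Matrix (Fin q1) (Fin p1) ℂ) (Ui : Matrix (Fin q1) (Fin p2) ℂ)
    (hU : Uiᴴ * Ui = 1) (A : Matrix (Fin p2) (Fin p1) ℂ) {γ : ℝ} (hγ : 0 < γ)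
    (Yo : Matrix (Fin p1) (Fin p1) ℂ) (hYu : IsUnit Yo)
    (hYo : Yoᴴ * Yo = ((γ : ℂ) ^ 2) • (1 : Matrix (Fin p1) (Fin p1) ℂ)
      - ((1 - Ui * Uiᴴ) * T1)ᴴ * ((1 - Ui * Uiᴴ) * T1)) :
    specNorm (T1 - Ui * A) < γ ↔ specNorm ((Uiᴴ * T1 - A) * Yo⁻¹) < 1 := by
  rw [specNorm_lt_iff _ hγ, step0 T1 Ui hU A, specNorm_lt_one_iff, ← sub_sub, ← hYo]
  have hinv : Yo⁻¹ * Yo = 1 := Matrix.nonsing_inv_mul _ ((Matrix.isUnit_iff_isUnit_det _).1 hYu)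
  have : star Yo * (1 - ((Uiᴴ * T1 - A) * Yo⁻¹)ᴴ * ((Uiᴴ * T1 - A) * Yo⁻¹)) * Yo
      = Yoᴴ * Yo - (Uiᴴ * T1 - A)ᴴ * (Uiᴴ * T1 - A) := by
    generalize Uiᴴ * T1 - A = B
    have hB : B * Yo⁻¹ * Yo = B := by rw [Matrix.mul_assoc, hinv, Matrix.mul_one]
    have e : star Yo * ((B * Yo⁻¹)ᴴ * (B * Yo⁻¹)) * Yo
        = (B * Yo⁻¹ * Yo)ᴴ * (B * Yo⁻¹ * Yo) := by
      rw [conjTranspose_mul (B * Yo⁻¹) Yo, star_eq_conjTranspose]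
      simp only [Matrix.mul_assoc]
    rw [Matrix.mul_sub, Matrix.sub_mul, e, hB, Matrix.mul_one, star_eq_conjTranspose]
  rw [← this]
  exact Matrix.IsUnit.posDef_star_left_conjugate_iff hYu

theorem step2 (B : Matrix (Fin p2) (Fin p1) ℂ) (V : Matrix (Fin q2) (Fin p1) ℂ)
    (hV : V * Vᴴ = 1) (C : Matrix (Fin p2) (Fin q2) ℂ) :
    (B - C * V) * (B - C * V)ᴴ = (B * (1 - Vᴴ * V)) * (B * (1 - Vᴴ * V))ᴴ
      + (B * Vᴴ - C) * (B * Vᴴ - C)ᴴ := by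
  rw [pyth' V hV (B - C * V)]
  have h1 : (B - C * V) * (1 - Vᴴ * V) = B * (1 - Vᴴ * V) := by
    rw [Matrix.sub_mul B, Matrix.mul_assoc C, Matrix.mul_sub V,
      ← Matrix.mul_assoc V, hV]
    simp
  have h2 : (B - C * V) * Vᴴ = B * Vᴴ - C := by
    rw [Matrix.sub_mul, Matrix.mul_assoc, hV, Matrix.mul_one]
  rw [h1, h2]

theorem step2_Z (B : Matrix (Fin p2) (Fin p1) ℂ) (V : Matrix (Fin q2) (Fin p1) ℂ)
    (hV : V * Vᴴ = 1) (C : Matrix (Fin p2) (Fin q2) ℂ)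
    (h : specNorm (B - C * V) < 1) : specNorm (B * (1 - Vᴴ * V)) < 1 := by
  rw [specNorm_lt_one_iff'] at h ⊢
  rw [step2 B V hV C] at h
  have h2 := h.add_posSemidef (Matrix.posSemidef_self_mul_conjTranspose (B * Vᴴ - C))
  convert h2 using 1
  abel

theorem step3 (B : Matrix (Fin p2) (Fin p1) ℂ) (V : Matrix (Fin q2) (Fin p1) ℂ)
    (hV : V * Vᴴ = 1) (C : Matrix (Fin p2) (Fin q2) ℂ)
    (Zc : Matrix (Fin p2) (Fin p2) ℂ) (hZu : IsUnit Zc)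
    (hZ : Zc * Zcᴴ = 1 - (B * (1 - Vᴴ * V)) * (B * (1 - Vᴴ * V))ᴴ) :
    specNorm (B - C * V) < 1 ↔ specNorm (Zc⁻¹ * (B * Vᴴ - C)) < 1 := by
  rw [specNorm_lt_one_iff', step2 B V hV C, specNorm_lt_one_iff', ← sub_sub, ← hZ]
  have hinv : Zc * Zc⁻¹ = 1 := Matrix.mul_nonsing_inv _ ((Matrix.isUnit_iff_isUnit_det _).1 hZu)
  have : Zc * (1 - (Zc⁻¹ * (B * Vᴴ - C)) * (Zc⁻¹ * (B * Vᴴ - C))ᴴ) * star Zc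
      = Zc * Zcᴴ - (B * Vᴴ - C) * (B * Vᴴ - C)ᴴ := by
    generalize B * Vᴴ - C = S
    have hB : Zc * (Zc⁻¹ * S) = S := by rw [← Matrix.mul_assoc, hinv, Matrix.one_mul]
    have e : Zc * ((Zc⁻¹ * S) * (Zc⁻¹ * S)ᴴ) * star Zc
        = (Zc * (Zc⁻¹ * S)) * (Zc * (Zc⁻¹ * S))ᴴ := by
      rw [conjTranspose_mul Zc (Zc⁻¹ * S), star_eq_conjTranspose]
      simp only [Matrix.mul_assoc]
    rw [Matrix.mul_sub, Matrix.sub_mul, e, hB, Matrix.mul_one, star_eq_conjTranspose]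
  rw [← this]
  exact Matrix.IsUnit.posDef_star_right_conjugate_iff hZu

end Helpers

/-- Distributed H∞ control subject to delays, general `T3` case (Theorem 4, part 1):
`inf { ‖T1 − T2 (V + z^{−N} D) T3‖∞ : V_i ∈ 𝒴_i, D ∈ H∞ }
  = inf { γ : γ > ‖Y‖∞, ‖Z_γ‖∞ < 1, ∃ V_i ∈ 𝒴_i with dist(R̂_γ(V), H∞) < 1 }`. -/
theorem distributed_hinf_general_optimal (N : ℕ) (hN : 1 ≤ N) (q1 q2 p1 p2 : ℕ)
    (𝒴 : Fin N → Submodule ℂ (Matrix (Fin p2) (Fin q2) ℂ))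
    (T1 : Circle → Matrix (Fin q1) (Fin p1) ℂ) (hT1 : Continuous T1)
    (T2 : Circle → Matrix (Fin q1) (Fin p2) ℂ) (hT2 : Continuous T2)
    (T3 : Circle → Matrix (Fin q2) (Fin p1) ℂ) (hT3 : Continuous T3)
    (Ui : Circle → Matrix (Fin q1) (Fin p2) ℂ) (hUic : Continuous Ui)
    (hUiInner : ∀ z, (Ui z)ᴴ * Ui z = 1) (hUiH : MemHInf Ui)
    (Uo : Circle → Matrix (Fin p2) (Fin p2) ℂ) (hUoc : Continuous Uo)
    (hUoH : MemHInf Uo) (hUoUnit : ∀ z, IsUnit (Uo z))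
    (hUoInvH : MemHInf fun z => (Uo z)⁻¹)
    (hT2fact : ∀ z, T2 z = Ui z * Uo z)
    (Y : Circle → Matrix (Fin q1) (Fin p1) ℂ)
    (hY : Y = fun z => (1 - Ui z * (Ui z)ᴴ) * T1 z)
    (Yo : ℝ → Circle → Matrix (Fin p1) (Fin p1) ℂ)
    (hYoc : ∀ γ, hinfNorm Y < γ → Continuous (Yo γ))
    (hYoUnit : ∀ γ, hinfNorm Y < γ → ∀ z, IsUnit (Yo γ z))
    (hYoH : ∀ γ, hinfNorm Y < γ → MemHInf (Yo γ))
    (hYoInvH : ∀ γ, hinfNorm Y < γ → MemHInf fun z => (Yo γ z)⁻¹)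
    (hYofact : ∀ γ, hinfNorm Y < γ → ∀ z, (Yo γ z)ᴴ * Yo γ z
      = ((γ : ℂ) ^ 2) • (1 : Matrix (Fin p1) (Fin p1) ℂ) - (Y z)ᴴ * Y z)
    (Vci : ℝ → Circle → Matrix (Fin q2) (Fin p1) ℂ)
    (hVcic : ∀ γ, hinfNorm Y < γ → Continuous (Vci γ))
    (hVciH : ∀ γ, hinfNorm Y < γ → MemHInf (Vci γ))
    (hVciCoInner : ∀ γ, hinfNorm Y < γ → ∀ z, Vci γ z * (Vci γ z)ᴴ = 1)
    (Vco : ℝ → Circle → Matrix (Fin q2) (Fin q2) ℂ)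
    (hVcoc : ∀ γ, hinfNorm Y < γ → Continuous (Vco γ))
    (hVcoH : ∀ γ, hinfNorm Y < γ → MemHInf (Vco γ))
    (hVcoUnit : ∀ γ, hinfNorm Y < γ → ∀ z, IsUnit (Vco γ z))
    (hVcoInvH : ∀ γ, hinfNorm Y < γ → MemHInf fun z => (Vco γ z)⁻¹)
    (hT3fact : ∀ γ, hinfNorm Y < γ → ∀ z, T3 z * (Yo γ z)⁻¹ = Vco γ z * Vci γ z)
    (Z : ℝ → Circle → Matrix (Fin p2) (Fin p1) ℂ)
    (hZ : Z = fun γ z => (Ui z)ᴴ * T1 z * (Yo γ z)⁻¹ * (1 - (Vci γ z)ᴴ * Vci γ z))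
    (Zco : ℝ → Circle → Matrix (Fin p2) (Fin p2) ℂ)
    (hZcoc : ∀ γ, hinfNorm Y < γ → hinfNorm (Z γ) < 1 → Continuous (Zco γ))
    (hZcoUnit : ∀ γ, hinfNorm Y < γ → hinfNorm (Z γ) < 1 → ∀ z, IsUnit (Zco γ z))
    (hZcoH : ∀ γ, hinfNorm Y < γ → hinfNorm (Z γ) < 1 → MemHInf (Zco γ))
    (hZcoInvH : ∀ γ, hinfNorm Y < γ → hinfNorm (Z γ) < 1 →
      MemHInf fun z => (Zco γ z)⁻¹)
    (hZcofact : ∀ γ, hinfNorm Y < γ → hinfNorm (Z γ) < 1 → ∀ z, Zco γ z * (Zco γ z)ᴴ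
      = (1 : Matrix (Fin p2) (Fin p2) ℂ) - Z γ z * (Z γ z)ᴴ)
    (R : ℝ → Circle → Matrix (Fin p2) (Fin q2) ℂ)
    (hR : R = fun γ z => (Zco γ z)⁻¹ * (Ui z)ᴴ * T1 z * (Yo γ z)⁻¹ * (Vci γ z)ᴴ)
    (Rhat : ℝ → (Fin N → Matrix (Fin p2) (Fin q2) ℂ) →
      Circle → Matrix (Fin p2) (Fin q2) ℂ)
    (hRhat : Rhat = fun γ V (z : Circle) =>
      ((z : ℂ) ^ N) • R γ z
        - (Zco γ z)⁻¹ * Uo z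
            * (((z : ℂ) ^ N) • ∑ i : Fin N, ((z : ℂ)⁻¹) ^ (i : ℕ) • V i)
            * Vco γ z) :
    sInf {c : ℝ | ∃ V : Fin N → Matrix (Fin p2) (Fin q2) ℂ, (∀ i, V i ∈ 𝒴 i) ∧
        ∃ D : Circle → Matrix (Fin p2) (Fin q2) ℂ, Continuous D ∧ MemHInf D ∧
          c = hinfNorm fun z : Circle =>
            T1 z - T2 z * ((∑ i : Fin N, ((z : ℂ)⁻¹) ^ (i : ℕ) • V i)
              + ((z : ℂ)⁻¹ ^ N) • D z) * T3 z}
      = sInf {γ : ℝ | hinfNorm Y < γ ∧ hinfNorm (Z γ) < 1 ∧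
          ∃ V : Fin N → Matrix (Fin p2) (Fin q2) ℂ, (∀ i, V i ∈ 𝒴 i) ∧
            distHInf (Rhat γ V) < 1} := by
  have hYc : Continuous Y := by rw [hY]; fun_prop
  have hZc : ∀ γ, hinfNorm Y < γ → Continuous (Z γ) := by
    intro γ hγ
    have h1 := (hYoInvH γ hγ).cont
    have h2 := hVcic γ hγ
    rw [hZ]; fun_prop
  have hsum : ∀ V : Fin N → Matrix (Fin p2) (Fin q2) ℂ, Continuous fun z : Circle =>
      ∑ i : Fin N, ((z : ℂ)⁻¹) ^ (i : ℕ) • V i := by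
    intro V
    have h1 : Continuous fun z : Circle => (z : ℂ)⁻¹ :=
      Continuous.inv₀ (f := fun z : Circle => (z : ℂ)) (by fun_prop) fun z => z.coe_ne_zero
    fun_prop
  have hEc : ∀ (V : Fin N → Matrix (Fin p2) (Fin q2) ℂ)
      (D : Circle → Matrix (Fin p2) (Fin q2) ℂ), Continuous D → Continuous fun z : Circle =>
            T1 z - T2 z * ((∑ i : Fin N, ((z : ℂ)⁻¹) ^ (i : ℕ) • V i)
              + ((z : ℂ)⁻¹ ^ N) • D z) * T3 z := by
    intro V D hD
    have h1 : Continuous fun z : Circle => (z : ℂ)⁻¹ :=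
      Continuous.inv₀ (f := fun z : Circle => (z : ℂ)) (by fun_prop) fun z => z.coe_ne_zero
    have h2 := hsum V
    fun_prop
  have hRc : ∀ γ, hinfNorm Y < γ → hinfNorm (Z γ) < 1 →
      ∀ V : Fin N → Matrix (Fin p2) (Fin q2) ℂ, Continuous (Rhat γ V) := by
    intro γ hγ hγ' V
    have h1 := (hYoInvH γ hγ).cont
    have h2 := hVcic γ hγ
    have h3 := hVcoc γ hγ
    have h4 := (hZcoInvH γ hγ hγ').cont
    have h5 := hsum V
    rw [hRhat, hR]; fun_prop
  -- factor out the inner part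
  have hT2Q : ∀ z (Q : Matrix (Fin p2) (Fin q2) ℂ),
      T1 z - T2 z * Q * T3 z = T1 z - Ui z * (Uo z * Q * T3 z) := by
    intro z Q; rw [hT2fact]; simp only [Matrix.mul_assoc]
  have key1 : ∀ γ, hinfNorm Y < γ → ∀ z (Q : Matrix (Fin p2) (Fin q2) ℂ),
      specNorm (T1 z - T2 z * Q * T3 z) < γ ↔
        specNorm ((Ui z)ᴴ * T1 z * (Yo γ z)⁻¹ - Uo z * Q * Vco γ z * Vci γ z) < 1 := by
    intro γ hγ z Q
    have hf := hYofact γ hγ z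
    rw [hY] at hf
    rw [hT2Q, step1 (T1 z) (Ui z) (hUiInner z) _ (lt_of_le_of_lt (hinfNorm_nonneg' _) hγ)
      (Yo γ z) (hYoUnit γ hγ z) hf, Matrix.sub_mul, Matrix.mul_assoc _ (T3 z), hT3fact γ hγ z]
    simp only [Matrix.mul_assoc]
  have key2 : ∀ γ, hinfNorm Y < γ → hinfNorm (Z γ) < 1 →
      ∀ (V : Fin N → Matrix (Fin p2) (Fin q2) ℂ) (z : Circle) (D : Matrix (Fin p2) (Fin q2) ℂ),
      specNorm (T1 z - T2 z * ((∑ i : Fin N, ((z : ℂ)⁻¹) ^ (i : ℕ) • V i)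
              + ((z : ℂ)⁻¹ ^ N) • D) * T3 z) < γ ↔
        specNorm (Rhat γ V z - (Zco γ z)⁻¹ * Uo z * D * Vco γ z) < 1 := by
    intro γ hγ hγ' V z D
    have hf := hZcofact γ hγ hγ' z
    rw [hZ] at hf
    rw [key1 γ hγ, step3 _ (Vci γ z) (hVciCoInner γ hγ z) _ (Zco γ z) (hZcoUnit γ hγ hγ' z) hf,
      ← specNorm_unit_smul _ ((z : ℂ) ^ N) (by rw [norm_pow, Circle.norm_coe, one_pow])]
    have e : Rhat γ V z - (Zco γ z)⁻¹ * Uo z * D * Vco γ z = ((z : ℂ) ^ N) •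
        ((Zco γ z)⁻¹ * ((Ui z)ᴴ * T1 z * (Yo γ z)⁻¹ * (Vci γ z)ᴴ - Uo z *
          ((∑ i : Fin N, ((z : ℂ)⁻¹) ^ (i : ℕ) • V i) + ((z : ℂ)⁻¹ ^ N) • D) * Vco γ z)) := by
      rw [hRhat, hR]
      beta_reduce
      generalize (∑ i : Fin N, ((z : ℂ)⁻¹) ^ (i : ℕ) • V i) = S
      have hz : (z : ℂ) ^ N * (z : ℂ)⁻¹ ^ N = 1 := by
        rw [← mul_pow, mul_inv_cancel₀ z.coe_ne_zero, one_pow]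
      simp only [Matrix.mul_sub, Matrix.mul_add, Matrix.add_mul, Matrix.mul_smul, Matrix.smul_mul,
        smul_sub, smul_add, smul_smul, hz, one_smul, Matrix.mul_assoc, sub_sub]
    rw [e]
  have claimA : ∀ γ, (hinfNorm Y < γ ∧ hinfNorm (Z γ) < 1 ∧
          ∃ V : Fin N → Matrix (Fin p2) (Fin q2) ℂ, (∀ i, V i ∈ 𝒴 i) ∧
            distHInf (Rhat γ V) < 1) →
      ∃ V : Fin N → Matrix (Fin p2) (Fin q2) ℂ, (∀ i, V i ∈ 𝒴 i) ∧
        ∃ D : Circle → Matrix (Fin p2) (Fin q2) ℂ, Continuous D ∧ MemHInf D ∧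
          (hinfNorm fun z : Circle =>
            T1 z - T2 z * ((∑ i : Fin N, ((z : ℂ)⁻¹) ^ (i : ℕ) • V i)
              + ((z : ℂ)⁻¹ ^ N) • D z) * T3 z) < γ := by
    rintro γ ⟨hγ, hγ', V, hV, hd⟩
    obtain ⟨X, hX, hlt⟩ := (distHInf_lt_iff _ _).1 hd
    rw [hinfNorm_lt_iff (by exact (hRc γ hγ hγ' V).sub hX.cont)] at hlt
    have hDH : MemHInf fun z => (Uo z)⁻¹ * Zco γ z * X z * (Vco γ z)⁻¹ :=
      ((hUoInvH.mul' (hZcoH γ hγ hγ')).mul' hX).mul' (hVcoInvH γ hγ)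
    refine ⟨V, hV, _, hDH.cont, hDH, ?_⟩
    rw [hinfNorm_lt_iff (hEc V _ hDH.cont)]
    intro z
    rw [key2 γ hγ hγ']
    have e : (Zco γ z)⁻¹ * Uo z * ((Uo z)⁻¹ * Zco γ z * X z * (Vco γ z)⁻¹) * Vco γ z = X z := by
      have a1 : Uo z * (Uo z)⁻¹ = 1 :=
        Matrix.mul_nonsing_inv _ ((Matrix.isUnit_iff_isUnit_det _).1 (hUoUnit z))
      have a2 : (Zco γ z)⁻¹ * Zco γ z = 1 :=
        Matrix.nonsing_inv_mul _ ((Matrix.isUnit_iff_isUnit_det _).1 (hZcoUnit γ hγ hγ' z))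
      have a3 : (Vco γ z)⁻¹ * Vco γ z = 1 :=
        Matrix.nonsing_inv_mul _ ((Matrix.isUnit_iff_isUnit_det _).1 (hVcoUnit γ hγ z))
      calc _ = (Zco γ z)⁻¹ * ((Uo z * (Uo z)⁻¹) * (Zco γ z * (X z * ((Vco γ z)⁻¹ * Vco γ z)))) := by
            simp only [Matrix.mul_assoc]
        _ = X z := by
            rw [a1, a3, Matrix.one_mul, Matrix.mul_one, ← Matrix.mul_assoc, a2, Matrix.one_mul]
    rw [e]
    exact hlt z
  have claimB : ∀ (V : Fin N → Matrix (Fin p2) (Fin q2) ℂ), (∀ i, V i ∈ 𝒴 i) →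
        ∀ D : Circle → Matrix (Fin p2) (Fin q2) ℂ, Continuous D → MemHInf D → ∀ γ,
          (hinfNorm fun z : Circle =>
            T1 z - T2 z * ((∑ i : Fin N, ((z : ℂ)⁻¹) ^ (i : ℕ) • V i)
              + ((z : ℂ)⁻¹ ^ N) • D z) * T3 z) < γ →
        (hinfNorm Y < γ ∧ hinfNorm (Z γ) < 1 ∧
          ∃ V : Fin N → Matrix (Fin p2) (Fin q2) ℂ, (∀ i, V i ∈ 𝒴 i) ∧
            distHInf (Rhat γ V) < 1) := by
    intro V hV D hD hDH γ h
    rw [hinfNorm_lt_iff (hEc V D hD)] at h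
    have hγ : hinfNorm Y < γ := by
      rw [hinfNorm_lt_iff hYc]
      intro z
      have hz := h z
      rw [hT2Q] at hz
      rw [hY]
      exact step0_Y _ _ (hUiInner z) _ hz
    have hγ' : hinfNorm (Z γ) < 1 := by
      rw [hinfNorm_lt_iff (hZc γ hγ)]
      intro z
      have hz := h z
      rw [key1 γ hγ] at hz
      rw [hZ]
      exact step2_Z _ _ (hVciCoInner γ hγ z) _ hz
    refine ⟨hγ, hγ', V, hV, ?_⟩
    rw [distHInf_lt_iff]
    have hXH : MemHInf fun z => (Zco γ z)⁻¹ * Uo z * D z * Vco γ z :=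
      (((hZcoInvH γ hγ hγ').mul' hUoH).mul' hDH).mul' (hVcoH γ hγ)
    refine ⟨_, hXH, ?_⟩
    rw [hinfNorm_lt_iff (by exact (hRc γ hγ hγ' V).sub hXH.cont)]
    intro z
    exact (key2 γ hγ hγ' V z (D z)).1 (h z)
  apply le_antisymm
  · refine le_csInf ?_ ?_
    · exact ⟨_, claimB 0 (fun i => (𝒴 i).zero_mem) (fun _ => 0) continuous_const MemHInf.zero' _
        (lt_add_one _)⟩
    · intro γ hγ
      obtain ⟨V, hV, D, hD, hDH, hlt⟩ := claimA γ hγ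
      refine le_trans (csInf_le ⟨0, ?_⟩ ⟨V, hV, D, hD, hDH, rfl⟩) hlt.le
      rintro _ ⟨V, -, D, -, -, rfl⟩
      exact hinfNorm_nonneg' _
  · refine le_csInf ?_ ?_
    · exact ⟨_, 0, fun i => (𝒴 i).zero_mem, fun _ => 0, continuous_const, MemHInf.zero', rfl⟩
    · rintro _ ⟨V, hV, D, hD, hDH, rfl⟩
      refine le_of_forall_gt fun γ hγ => ?_
      obtain ⟨γ', h1, h2⟩ := exists_between hγ
      refine lt_of_le_of_lt (csInf_le ⟨0, ?_⟩ (claimB V hV D hD hDH γ' h1)) h2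
      rintro g ⟨hg, -⟩
      exact (lt_of_le_of_lt (hinfNorm_nonneg' _) hg).le
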